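/- arXiv:1704.08191 — 2 statements merged into one kernel-verified Lean document; each statement's English description precedes it below -/
import Mathlib

section
/- For all real numbers α > 0, β > 0 and every real number m, the modified extension of the classical beta function has the symmetric integral representation B(α, β; m) = (1/2) · ∫₀^∞ (u^(α-1) + u^(β-1)) / (1+u)^(α+β) · exp(m·u / (1+u)²) du. -/
/-!
The substitution `t = u / (1 + u)` carries `∫₀¹` to `∫₀^∞`, the weight `t^(α-1) (1-t)^(β-1) dt` to
`u^(α-1) / (1+u)^(α+β) du`, and `t (1 - t)` to `u / (1+u)²`. The reflection `t ↦ 1 - t` fixes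
`t (1 - t)` and swaps `α` and `β`, so the integral is also the average of its representations for
`(α, β)` and `(β, α)`; convergence of the beta integral allows the two to be merged. The same
argument serves any continuous function `φ` of `t (1 - t)` in place of the exponential.
-/

open MeasureTheory Real

/-- The modified extension of the classical beta function (MECBF). -/
noncomputable def mecbf (α β m : ℝ) : ℝ :=
  ∫ t in (0:ℝ)..1, t ^ (α - 1) * (1 - t) ^ (β - 1) * Real.exp (m * t * (1 - t))

open Set

lemma bijOn_div_one_add {K : Type*} [Field K] [LinearOrder K] [IsStrictOrderedRing K] :
    BijOn (fun u : K ↦ u / (1 + u)) (Ioi 0) (Ioo 0 1) := by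
  refine InvOn.bijOn (f' := fun t ↦ t / (1 - t)) ⟨?leftInv, ?rightInv⟩ ?mapsTo ?mapsTo_inv
  case leftInv =>
    intro u (hu : 0 < u)
    have : 1 - u / (1 + u) = 1 / (1 + u) := by field
    simp only [this]
    field
  case rightInv =>
    intro t ht
    have : 1 - t ≠ 0 := (sub_pos.2 ht.2).ne'
    have : 1 + t / (1 - t) = 1 / (1 - t) := by field
    simp only [this]
    field
  case mapsTo =>
    intro u (hu : 0 < u)
    exact ⟨by positivity, (div_lt_one (by positivity)).2 (lt_one_add u)⟩
  case mapsTo_inv =>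
    exact fun t ht ↦ div_pos ht.1 (sub_pos.2 ht.2)

lemma hasDerivAt_div_one_add {𝕜 : Type*} [NontriviallyNormedField 𝕜] {u : 𝕜} (hu : 1 + u ≠ 0) :
    HasDerivAt (fun u : 𝕜 ↦ u / (1 + u)) ((1 + u) ^ 2)⁻¹ u := by
  refine ((hasDerivAt_id' u).fun_div ((hasDerivAt_id' u).const_add 1) hu).congr_deriv ?_
  field

section Substitution

variable {E : Type*} [NormedAddCommGroup E] [NormedSpace ℝ E]

lemma hasDerivWithinAt_div_one_add_Ioi {u : ℝ} (hu : u ∈ Ioi 0) :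
    HasDerivWithinAt (fun u : ℝ ↦ u / (1 + u)) ((1 + u) ^ 2)⁻¹ (Ioi 0) u :=
  (hasDerivAt_div_one_add (add_pos one_pos hu).ne').hasDerivWithinAt

lemma integral_Ioo_eq_integral_Ioi_div_one_add (f : ℝ → E) :
    ∫ t in Ioo 0 1, f t = ∫ u in Ioi 0, ((1 + u) ^ 2)⁻¹ • f (u / (1 + u)) := by
  simp_rw [← bijOn_div_one_add.image_eq, integral_image_eq_integral_abs_deriv_smul
    measurableSet_Ioi (fun _ ↦ hasDerivWithinAt_div_one_add_Ioi) bijOn_div_one_add.injOn,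
    abs_inv, abs_sq]

lemma integrableOn_Ioo_iff_integrableOn_Ioi_div_one_add (f : ℝ → E) :
    IntegrableOn f (Ioo 0 1) ↔
      IntegrableOn (fun u ↦ ((1 + u) ^ 2)⁻¹ • f (u / (1 + u))) (Ioi 0) := by
  simp_rw [← bijOn_div_one_add.image_eq, integrableOn_image_iff_integrableOn_abs_deriv_smul
    measurableSet_Ioi (fun _ ↦ hasDerivWithinAt_div_one_add_Ioi) bijOn_div_one_add.injOn,
    abs_inv, abs_sq]

end Substitution

/-- The weight of the beta integral: the unnormalised density of the beta distribution, meant for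
`t ∈ (0, 1)`. -/
noncomputable def betaWeight (α β t : ℝ) : ℝ :=
  t ^ (α - 1) * (1 - t) ^ (β - 1)

/-- The unnormalised density of the beta prime distribution, meant for `u > 0`: the pullback of
`betaWeight α β` under `t = u / (1 + u)`, Jacobian included. -/
noncomputable def betaPrimeWeight (α β u : ℝ) : ℝ :=
  u ^ (α - 1) / (1 + u) ^ (α + β)

lemma betaWeight_one_sub (α β t : ℝ) : betaWeight α β (1 - t) = betaWeight β α t := by
  rw [betaWeight, betaWeight, sub_sub_cancel, mul_comm]

lemma inv_one_add_sq_mul_betaWeight_div_one_add (α β : ℝ) {u : ℝ} (hu : 0 < u) :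
    ((1 + u) ^ 2)⁻¹ * betaWeight α β (u / (1 + u)) = betaPrimeWeight α β u := by
  have hu' : 0 < 1 + u := by positivity
  have one_sub_div : 1 - u / (1 + u) = (1 + u)⁻¹ := by field
  have rpow_split : (1 + u) ^ (α + β) = (1 + u) ^ 2 * (1 + u) ^ (α - 1) * (1 + u) ^ (β - 1) := by
    rw [← rpow_natCast, ← rpow_add hu', ← rpow_add hu']
    congr 1
    push_cast
    ring
  rw [betaWeight, betaPrimeWeight, one_sub_div, div_rpow hu.le hu'.le, inv_rpow hu'.le, rpow_split]
  field

lemma intervalIntegrable_betaWeight {α β : ℝ} (hα : 0 < α) (hβ : 0 < β) :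
    IntervalIntegrable (betaWeight α β) volume 0 1 := by
  have h := (Complex.betaIntegral_convergent (u := α) (v := β) hα hβ).norm
  rw [intervalIntegrable_iff_integrableOn_Ioo_of_le zero_le_one] at h ⊢
  refine h.congr_fun (fun t ht ↦ ?_) measurableSet_Ioo
  have norm_cpow {x : ℝ} (hx : 0 < x) (γ : ℝ) : ‖(x : ℂ) ^ ((γ : ℂ) - 1)‖ = x ^ (γ - 1) := by
    rw [Complex.norm_cpow_eq_rpow_re_of_pos hx, Complex.sub_re, Complex.ofReal_re, Complex.one_re]
  simp only [norm_mul, betaWeight]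
  rw [norm_cpow ht.1, ← norm_cpow (sub_pos.2 ht.2), Complex.ofReal_sub, Complex.ofReal_one]

section SymmetricIntegrand

variable {E : Type*} [NormedAddCommGroup E] [NormedSpace ℝ E]

lemma integral_betaWeight_smul_comm (α β : ℝ) (φ : ℝ → E) :
    ∫ t in (0 : ℝ)..1, betaWeight α β t • φ (t * (1 - t)) =
      ∫ t in (0 : ℝ)..1, betaWeight β α t • φ (t * (1 - t)) := by
  have mul_one_sub_reflect (t : ℝ) : (1 - t) * (1 - (1 - t)) = t * (1 - t) := by ring
  have h := intervalIntegral.integral_comp_sub_left (a := 0) (b := 1)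
    (fun t ↦ betaWeight α β t • φ (t * (1 - t))) 1
  simpa only [betaWeight_one_sub, mul_one_sub_reflect, sub_self, sub_zero] using h.symm

lemma inv_one_add_sq_smul_betaWeight_smul (α β : ℝ) (φ : ℝ → E) {u : ℝ} (hu : 0 < u) :
    ((1 + u) ^ 2)⁻¹ • betaWeight α β (u / (1 + u)) • φ (u / (1 + u) * (1 - u / (1 + u))) =
      betaPrimeWeight α β u • φ (u / (1 + u) ^ 2) := by
  have mul_one_sub : u / (1 + u) * (1 - u / (1 + u)) = u / (1 + u) ^ 2 := by field
  rw [smul_smul, inv_one_add_sq_mul_betaWeight_div_one_add α β hu, mul_one_sub]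

lemma integral_betaWeight_smul_eq_integral_Ioi (α β : ℝ) (φ : ℝ → E) :
    ∫ t in (0 : ℝ)..1, betaWeight α β t • φ (t * (1 - t)) =
      ∫ u in Ioi 0, betaPrimeWeight α β u • φ (u / (1 + u) ^ 2) := by
  rw [intervalIntegral.integral_of_le zero_le_one, integral_Ioc_eq_integral_Ioo,
    integral_Ioo_eq_integral_Ioi_div_one_add]
  exact setIntegral_congr_fun measurableSet_Ioi
    fun _ hu ↦ inv_one_add_sq_smul_betaWeight_smul α β φ hu

lemma continuousOn_comp_mul_one_sub {X : Type*} [TopologicalSpace X] {φ : ℝ → X}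
    (hφ : ContinuousOn φ (Icc 0 (1 / 4))) :
    ContinuousOn (fun t ↦ φ (t * (1 - t))) (Icc 0 1) := by
  refine hφ.comp (by fun_prop) fun t ht ↦ ⟨mul_nonneg ht.1 (sub_nonneg.2 ht.2), ?_⟩
  linarith [sq_nonneg (t - 1 / 2)]

lemma integrableOn_betaPrimeWeight_smul {α β : ℝ} (hα : 0 < α) (hβ : 0 < β) {φ : ℝ → E}
    (hφ : ContinuousOn φ (Icc 0 (1 / 4))) :
    IntegrableOn (fun u ↦ betaPrimeWeight α β u • φ (u / (1 + u) ^ 2)) (Ioi 0) := by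
  have h : IntervalIntegrable (fun t ↦ betaWeight α β t • φ (t * (1 - t))) volume 0 1 :=
    (intervalIntegrable_betaWeight hα hβ).smul_continuousOn <| by
      simpa only [uIcc_of_le zero_le_one] using continuousOn_comp_mul_one_sub hφ
  rw [intervalIntegrable_iff_integrableOn_Ioo_of_le zero_le_one,
    integrableOn_Ioo_iff_integrableOn_Ioi_div_one_add] at h
  exact h.congr_fun (fun _ hu ↦ inv_one_add_sq_smul_betaWeight_smul α β φ hu) measurableSet_Ioi

theorem mecbf_symmetric_repr_general {α β : ℝ} (hα : 0 < α) (hβ : 0 < β) {φ : ℝ → E}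
    (hφ : ContinuousOn φ (Icc 0 (1 / 4))) :
    ∫ t in (0 : ℝ)..1, (t ^ (α - 1) * (1 - t) ^ (β - 1)) • φ (t * (1 - t)) =
      (1 / 2 : ℝ) • ∫ u in Ioi 0,
        ((u ^ (α - 1) + u ^ (β - 1)) / (1 + u) ^ (α + β)) • φ (u / (1 + u) ^ 2) := by
  have weight_add (u : ℝ) : (u ^ (α - 1) + u ^ (β - 1)) / (1 + u) ^ (α + β) =
      betaPrimeWeight α β u + betaPrimeWeight β α u := by
    rw [betaPrimeWeight, betaPrimeWeight, add_comm β α, add_div]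
  have average : ∫ t in (0 : ℝ)..1, betaWeight α β t • φ (t * (1 - t)) =
      (1 / 2 : ℝ) • ((∫ u in Ioi 0, betaPrimeWeight α β u • φ (u / (1 + u) ^ 2)) +
        ∫ u in Ioi 0, betaPrimeWeight β α u • φ (u / (1 + u) ^ 2)) := by
    rw [← integral_betaWeight_smul_eq_integral_Ioi, ← integral_betaWeight_smul_eq_integral_Ioi,
      ← integral_betaWeight_smul_comm α β φ]
    module
  simp_rw [weight_add, add_smul]
  rw [integral_add (integrableOn_betaPrimeWeight_smul hα hβ hφ)
    (integrableOn_betaPrimeWeight_smul hβ hα hφ)]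
  exact average

end SymmetricIntegrand

theorem mecbf_symmetric_repr (α β m : ℝ) (hα : 0 < α) (hβ : 0 < β) :
    mecbf α β m =
      (1 / 2) * ∫ u in Set.Ioi (0 : ℝ),
        (u ^ (α - 1) + u ^ (β - 1)) / (1 + u) ^ (α + β) *
          Real.exp (m * u / (1 + u) ^ 2) := by
  simpa only [mecbf, smul_eq_mul, mul_assoc, mul_div_assoc] using
    mecbf_symmetric_repr_general hα hβ (φ := fun s ↦ exp (m * s)) (by fun_prop)
end

section
/- For all real numbers α > 0, β > 0 and every real number m, the modified extension of the classical beta function has the integral representation B(α, β; m) = 2^(2-α-β) · ∫_{0}^{∞} cosh((α-β)·x) · exp(m / (4·cosh²x)) / (cosh x)^(α+β) dx. -/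
/-!
Substitute `t = eˣ / (eˣ + e⁻ˣ)`, which is `sigmoid (2x)` and maps `ℝ` onto `(0, 1)`. Then
`1 - t` is the same expression at `-x`, so `t (1 - t) = 1 / (4 cosh² x)` is even in `x`, and the
only factor of the transformed integrand that is not even is `exp ((α - β) x)`. Folding the line at
the origin turns this factor into `2 cosh ((α - β) x)`. The same computation works with any
`φ (t (1 - t))` in place of `exp (m t (1 - t))`.
-/

open MeasureTheory Real

lemma sigmoid_two_mul (x : ℝ) : sigmoid (2 * x) = exp x / (2 * cosh x) := by
  have hexp : exp x * exp (-(2 * x)) = exp (-x) := by rw [← exp_add]; ring_nf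
  rw [sigmoid_def, cosh_eq, mul_div_cancel₀ _ two_ne_zero, ← hexp]
  field_simp

lemma one_sub_sigmoid_two_mul (x : ℝ) : 1 - sigmoid (2 * x) = exp (-x) / (2 * cosh x) := by
  rw [← sigmoid_neg, ← mul_neg, sigmoid_two_mul, cosh_neg]

lemma sigmoid_two_mul_mul_one_sub (x : ℝ) :
    sigmoid (2 * x) * (1 - sigmoid (2 * x)) = 1 / (4 * cosh x ^ 2) := by
  rw [one_sub_sigmoid_two_mul, sigmoid_two_mul, div_mul_div_comm, ← exp_add, add_neg_cancel,
    exp_zero]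
  ring

lemma sigmoid_two_mul_rpow_mul_one_sub_rpow (a b x : ℝ) :
    sigmoid (2 * x) ^ a * (1 - sigmoid (2 * x)) ^ b =
      exp ((a - b) * x) / (2 * cosh x) ^ (a + b) := by
  have hcosh : 0 < 2 * cosh x := mul_pos two_pos (cosh_pos x)
  rw [one_sub_sigmoid_two_mul, sigmoid_two_mul, div_rpow (exp_pos x).le hcosh.le,
    div_rpow (exp_pos (-x)).le hcosh.le, div_mul_div_comm, ← rpow_add hcosh, ← exp_mul, ← exp_mul,
    ← exp_add]
  ring_nf

lemma hasDerivAt_sigmoid_two_mul (x : ℝ) :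
    HasDerivAt (fun y ↦ sigmoid (2 * y)) (1 / (2 * cosh x ^ 2)) x := by
  convert! (hasDerivAt_sigmoid (2 * x)).comp x ((hasDerivAt_id x).const_mul 2) using 1
  rw [sigmoid_two_mul_mul_one_sub]
  ring

lemma monotone_sigmoid_two_mul : Monotone fun x ↦ sigmoid (2 * x) :=
  sigmoid_monotone.comp (monotone_id.const_mul zero_le_two)

lemma image_univ_sigmoid_two_mul : (fun x ↦ sigmoid (2 * x)) '' Set.univ = Set.Ioo 0 1 := by
  rw [Set.image_univ, ← range_sigmoid]
  exact (mul_left_surjective₀ two_ne_zero).range_comp sigmoid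

section

variable {E : Type*} [NormedAddCommGroup E] [NormedSpace ℝ E]

lemma intervalIntegral_zero_one_eq_integral_sigmoid_two_mul (f : ℝ → E) :
    ∫ t in (0 : ℝ)..1, f t = ∫ x, (1 / (2 * cosh x ^ 2)) • f (sigmoid (2 * x)) := by
  rw [intervalIntegral.integral_of_le zero_le_one, integral_Ioc_eq_integral_Ioo,
    ← image_univ_sigmoid_two_mul, integral_image_eq_integral_deriv_smul_of_monotoneOn
      MeasurableSet.univ (fun x _ ↦ (hasDerivAt_sigmoid_two_mul x).hasDerivWithinAt)
      (monotone_sigmoid_two_mul.monotoneOn _), setIntegral_univ]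

lemma intervalIntegrable_zero_one_iff_integrable_sigmoid_two_mul {f : ℝ → E} :
    IntervalIntegrable f volume 0 1 ↔
      Integrable fun x ↦ (1 / (2 * cosh x ^ 2)) • f (sigmoid (2 * x)) := by
  rw [intervalIntegrable_iff_integrableOn_Ioo_of_le zero_le_one,
    ← image_univ_sigmoid_two_mul, integrableOn_image_iff_integrableOn_deriv_smul_of_monotoneOn
      MeasurableSet.univ (fun x _ ↦ (hasDerivAt_sigmoid_two_mul x).hasDerivWithinAt)
      (monotone_sigmoid_two_mul.monotoneOn _), integrableOn_univ]

lemma integral_eq_integral_Ioi_add_comp_neg {f : ℝ → E} (hf : Integrable f) :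
    ∫ x, f x = ∫ x in Set.Ioi 0, (f x + f (-x)) := by
  rw [integral_add hf.integrableOn hf.comp_neg.integrableOn, integral_comp_neg_Ioi, neg_zero,
    add_comm, intervalIntegral.integral_Iic_add_Ioi hf.integrableOn hf.integrableOn]

lemma deriv_smul_beta_integrand_sigmoid_two_mul (α β : ℝ) (φ : ℝ → E) (x : ℝ) :
    (1 / (2 * cosh x ^ 2)) • (sigmoid (2 * x) ^ (α - 1) * (1 - sigmoid (2 * x)) ^ (β - 1)) •
        φ (sigmoid (2 * x) * (1 - sigmoid (2 * x))) =
      (2 ^ (1 - α - β) * (exp ((α - β) * x) / cosh x ^ (α + β))) • φ (1 / (4 * cosh x ^ 2)) := by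
  have hcosh : 0 < cosh x := cosh_pos x
  have hpow : (2 * cosh x) ^ (α - 1 + (β - 1)) =
      cosh x ^ (α + β) / (2 * 2 ^ (1 - α - β) * cosh x ^ 2) := by
    rw [show α - 1 + (β - 1) = α + β - (2 : ℕ) by push_cast; ring,
      show 1 - α - β = 1 - (α + β) by ring, rpow_sub_natCast (by positivity),
      mul_rpow zero_le_two hcosh.le, rpow_sub two_pos, rpow_one]
    field_simp
  rw [sigmoid_two_mul_mul_one_sub, sigmoid_two_mul_rpow_mul_one_sub_rpow, smul_smul, hpow,
    sub_sub_sub_cancel_right]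
  congr 1
  field_simp

theorem mecbf_cosh_half_line_repr_general (α β : ℝ) (φ : ℝ → E)
    (hφ : IntervalIntegrable (fun t ↦ (t ^ (α - 1) * (1 - t) ^ (β - 1)) • φ (t * (1 - t)))
      volume 0 1) :
    ∫ t in (0 : ℝ)..1, (t ^ (α - 1) * (1 - t) ^ (β - 1)) • φ (t * (1 - t)) =
      (2 : ℝ) ^ (2 - α - β) • ∫ x in Set.Ioi (0 : ℝ),
        (cosh ((α - β) * x) / cosh x ^ (α + β)) • φ (1 / (4 * cosh x ^ 2)) := by
  have hint := intervalIntegrable_zero_one_iff_integrable_sigmoid_two_mul.1 hφ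
  simp only [deriv_smul_beta_integrand_sigmoid_two_mul] at hint
  simp only [intervalIntegral_zero_one_eq_integral_sigmoid_two_mul,
    deriv_smul_beta_integrand_sigmoid_two_mul]
  rw [integral_eq_integral_Ioi_add_comp_neg hint, ← integral_smul]
  congr 1 with x
  rw [cosh_neg, ← add_smul, smul_smul, cosh_eq ((α - β) * x), mul_neg,
    show 2 - α - β = 1 - α - β + 1 by ring, rpow_add_one two_ne_zero]
  congr 1
  ring

end

lemma intervalIntegrable_rpow_mul_one_sub_rpow {α β : ℝ} (hα : 0 < α) (hβ : 0 < β) :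
    IntervalIntegrable (fun t : ℝ ↦ t ^ (α - 1) * (1 - t) ^ (β - 1)) volume 0 1 := by
  have hbeta : IntervalIntegrable
      (fun t : ℝ ↦ (t : ℂ) ^ ((α : ℂ) - 1) * (1 - (t : ℂ)) ^ ((β : ℂ) - 1)) volume 0 1 :=
    Complex.betaIntegral_convergent (by simpa) (by simpa)
  refine hbeta.norm.congr_uIoo fun t ht ↦ ?_
  rw [Set.uIoo_of_le zero_le_one] at ht
  simp only [norm_mul, ← Complex.ofReal_one, ← Complex.ofReal_sub,
    Complex.norm_cpow_eq_rpow_re_of_pos ht.1,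
    Complex.norm_cpow_eq_rpow_re_of_pos (sub_pos.2 ht.2), Complex.ofReal_re]

theorem mecbf_cosh_half_line_repr (α β m : ℝ) (hα : 0 < α) (hβ : 0 < β) :
    mecbf α β m =
      (2 : ℝ) ^ (2 - α - β) *
        ∫ x in Set.Ioi (0 : ℝ),
          Real.cosh ((α - β) * x) * Real.exp (m / (4 * Real.cosh x ^ 2)) /
            Real.cosh x ^ (α + β) := by
  have hint := (intervalIntegrable_rpow_mul_one_sub_rpow hα hβ).mul_continuousOn
    (g := fun t ↦ exp (m * (t * (1 - t)))) (by fun_prop)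
  simpa only [mecbf, smul_eq_mul, mul_assoc, mul_one_div, mul_div_right_comm] using
    mecbf_cosh_half_line_repr_general α β (fun s ↦ exp (m * s)) hint
end
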